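/- Assume S[ω] and S[μ] are integrally closed (i.e. f,g ∉ S^{p∧p²}), h₁ ≠ 0, h₂ ≠ 0, and fg ∈ S^{p∧p²}. Then R is contained in the A-submodule of K generated by {1} together with p^{−1}·((ω−h₁, μ−h₂)A)^{p−1}, i.e. R ⊆ A + p^{−1}·(ω−h₁, μ−h₂)^{p−1}A. -/

import Mathlib

set_option synthInstance.maxHeartbeats 1000000
set_option maxHeartbeats 1600000

/-- A height one prime ideal of a commutative ring. -/
def IsHeightOnePrime {S : Type*} [CommRing S] (P : Ideal S) : Prop :=
  ∃ hP : P.IsPrime, Order.height (⟨P, hP⟩ : PrimeSpectrum S) = 1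

/-- `c ∈ S` is square free if `P S_P = c S_P` for every height one prime `P` containing `c`. -/
def PaperSquarefree {S : Type*} [CommRing S] (c : S) : Prop :=
  ∀ (P : Ideal S) (hP : P.IsPrime), Order.height (⟨P, hP⟩ : PrimeSpectrum S) = 1 → c ∈ P →
    haveI := hP
    Ideal.map (algebraMap S (Localization.AtPrime P)) P =
      Ideal.span {algebraMap S (Localization.AtPrime P) c}

/-- Two elements satisfy `𝒜₁` if no height one prime contains both of them. -/
def SatisfiesA1 {S : Type*} [CommRing S] (f g : S) : Prop :=
  ∀ P : Ideal S, IsHeightOnePrime P → ¬(f ∈ P ∧ g ∈ P)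

/-- The depth of a module over a local ring: the supremum of the lengths of
regular sequences on `M` contained in the maximal ideal. -/
noncomputable def modDepth (S : Type*) [CommRing S] [IsLocalRing S]
    (M : Type*) [AddCommGroup M] [Module S M] : ℕ∞ :=
  sSup {n : ℕ∞ | ∃ rs : List S, (rs.length : ℕ∞) = n ∧
    (∀ r ∈ rs, r ∈ IsLocalRing.maximalIdeal S) ∧ RingTheory.Sequence.IsRegular M rs}

/-- A commutative ring is Cohen-Macaulay if each of its localizations at a prime
has depth equal to its Krull dimension. -/
def IsCMRing (R : Type*) [CommRing R] : Prop :=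
  ∀ (Q : Ideal R) (hQ : Q.IsPrime),
    haveI := hQ
    (modDepth (Localization.AtPrime Q) (Localization.AtPrime Q) : WithBot ℕ∞) =
      ringKrullDim (Localization.AtPrime Q)

/-- The `n`-th symbolic power of a prime ideal `P`, i.e. `Pⁿ A_P ∩ A`. -/
noncomputable def symbPow {A : Type*} [CommRing A] (P : Ideal A) (hP : P.IsPrime) (n : ℕ) :
    Ideal A :=
  haveI := hP
  Ideal.comap (algebraMap A (Localization.AtPrime P))
    (Ideal.map (algebraMap A (Localization.AtPrime P)) (P ^ n))

/-- `ω`, as an element of the subalgebra `A = S[ω,μ]`. -/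
noncomputable def omegaA {S : Type*} [CommRing S] {K : Type*} [Field K] [Algebra S K]
    (ω μ : K) : Algebra.adjoin S ({ω, μ} : Set K) :=
  ⟨ω, Algebra.subset_adjoin (Set.mem_insert _ _)⟩

/-- `μ`, as an element of the subalgebra `A = S[ω,μ]`. -/
noncomputable def muA {S : Type*} [CommRing S] {K : Type*} [Field K] [Algebra S K]
    (ω μ : K) : Algebra.adjoin S ({ω, μ} : Set K) :=
  ⟨μ, Algebra.subset_adjoin (Set.mem_insert_of_mem _ rfl)⟩

/-- The ideal `P = (p, ω−h₁, μ−h₂)` of `A = S[ω,μ]`. -/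
noncomputable def Pid {S : Type*} [CommRing S] {K : Type*} [Field K] [Algebra S K]
    (p : ℕ) (ω μ : K) (h₁ h₂ : S) : Ideal (Algebra.adjoin S ({ω, μ} : Set K)) :=
  Ideal.span {(p : Algebra.adjoin S ({ω, μ} : Set K)),
    omegaA ω μ - algebraMap S _ h₁, muA ω μ - algebraMap S _ h₂}

/-- The colon module `(A :_K N) = {x ∈ K : x·N ⊆ A}`, as an `S`-submodule of `K`. -/
noncomputable def colonSubmodule (S : Type*) [CommRing S] (K : Type*) [Field K] [Algebra S K]
    (A : Subalgebra S K) (N : Set K) : Submodule S K where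
  carrier := {x : K | ∀ z ∈ N, x * z ∈ A}
  add_mem' := fun hx hy z hz => by
    simpa [add_mul] using add_mem (hx z hz) (hy z hz)
  zero_mem' := fun z hz => by simpa using A.zero_mem
  smul_mem' := fun c x hx z hz => by
    rw [Algebra.smul_def, mul_assoc]
    exact mul_mem (A.algebraMap_mem c) (hx z hz)

/-- `M` admits a free resolution `0 → Sⁿ → Sᵐ → M → 0`; for a finitely generated
module over a Noetherian local ring this says exactly `pd_S(M) ≤ 1`. -/
def HasFreeResLengthLE1 (S : Type*) [CommRing S] (M : Type*) [AddCommGroup M] [Module S M] :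
    Prop :=
  ∃ (n m : ℕ) (φ : (Fin n → S) →ₗ[S] (Fin m → S)) (ψ : (Fin m → S) →ₗ[S] M),
    Function.Injective φ ∧ Function.Surjective ψ ∧ LinearMap.range φ = LinearMap.ker ψ

/-- The ideal `Q` contains an `S`-regular sequence of length three, i.e. `Q` has grade
(at least) three. -/
def ContainsRegSeq3 (S : Type*) [CommRing S] (Q : Ideal S) : Prop :=
  ∃ rs : List S, rs.length = 3 ∧ (∀ r ∈ rs, r ∈ Q) ∧ RingTheory.Sequence.IsRegular S rs


lemma aux_pow_basis {F K : Type*} [Field F] [Field K] [Algebra F K] [FiniteDimensional F K]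
    {n : ℕ} (hn : 0 < n) (hfr : Module.finrank F K = n) (μ : K)
    (hgen : Algebra.adjoin F ({μ} : Set K) = ⊤) :
    ∃ b : Module.Basis (Fin n) F K, ∀ i, b i = μ ^ (i : ℕ) := by
  have htop : IntermediateField.adjoin F ({μ} : Set K) = ⊤ := by
    rw [eq_top_iff]
    intro x _
    apply IntermediateField.algebra_adjoin_le_adjoin
    rw [hgen]; trivial
  have hd := (Field.primitive_element_iff_minpoly_natDegree_eq F μ).1 htop
  have hli := linearIndependent_pow (K := F) μ
  rw [hd, hfr] at hli
  have : Nonempty (Fin n) := ⟨⟨0, hn⟩⟩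
  refine ⟨basisOfLinearIndependentOfCardEqFinrank hli (by simp [hfr]), ?_⟩
  intro i
  rw [coe_basisOfLinearIndependentOfCardEqFinrank]

lemma aux_trace_pow {F K : Type*} [Field F] [Field K] [Algebra F K]
    {n : ℕ} (hn : 0 < n) {μ : K} {G : F} (hμ : μ ^ n = algebraMap F K G)
    (b : Module.Basis (Fin n) F K) (hb : ∀ i, b i = μ ^ (i : ℕ)) (m : ℕ) (hm : ¬ n ∣ m) :
    Algebra.trace F K (μ ^ m) = 0 := by
  classical
  rw [Algebra.trace_eq_matrix_trace b, Matrix.trace]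
  apply Finset.sum_eq_zero
  intro i _
  rw [Matrix.diag_apply, Algebra.leftMulMatrix_eq_repr_mul, hb, ← pow_add]
  have h1 : μ ^ (m + i) = G ^ ((m + i) / n) • b ⟨(m + i) % n, Nat.mod_lt _ hn⟩ := by
    rw [hb, Algebra.smul_def, map_pow, ← hμ, ← pow_mul, ← pow_add, Nat.div_add_mod]
  rw [h1, map_smul, Finsupp.smul_apply, Module.Basis.repr_self, Finsupp.single_apply, if_neg, smul_zero]
  intro h
  apply hm
  have h2 : (m + i) % n = i := by simpa using congrArg Fin.val h
  have h3 : (m + i) ≡ 0 + i [MOD n] := by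
    rw [Nat.ModEq, h2, zero_add, Nat.mod_eq_of_lt i.2]
  exact (Nat.modEq_zero_iff_dvd).1 (Nat.ModEq.add_right_cancel' _ h3)

lemma aux_trace_zero {F K : Type*} [Field F] [Field K] [Algebra F K]
    {n : ℕ} (hn : 0 < n) {μ : K} {G : F} (hμ : μ ^ n = algebraMap F K G)
    (b : Module.Basis (Fin n) F K) (hb : ∀ i, b i = μ ^ (i : ℕ)) (r : K) :
    Algebra.trace F K r = (n : F) * b.repr r ⟨0, hn⟩ := by
  have : FiniteDimensional F K := b.finiteDimensional_of_finite
  have hfr : Module.finrank F K = n := by simpa using Module.finrank_eq_card_basis b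
  conv_lhs => rw [← b.sum_repr r]
  rw [map_sum, Finset.sum_eq_single ⟨0, hn⟩]
  · rw [map_smul, hb]
    simp only [pow_zero]
    rw [← map_one (algebraMap F K), Algebra.trace_algebraMap, hfr, smul_eq_mul, nsmul_eq_mul]
    ring
  · intro i _ hi
    rw [map_smul, hb, aux_trace_pow hn hμ b hb, smul_zero]
    intro h
    have := Nat.eq_zero_of_dvd_of_lt h i.2
    exact hi (Fin.ext this)
  · simp

lemma aux_trace_mul {F K : Type*} [Field F] [Field K] [Algebra F K]
    {n : ℕ} (hn : 0 < n) {μ : K} {G : F} (hμ : μ ^ n = algebraMap F K G)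
    (b : Module.Basis (Fin n) F K) (hb : ∀ i, b i = μ ^ (i : ℕ)) (r : K) (j : Fin n) :
    Algebra.trace F K (r * μ ^ (n - (j : ℕ))) = (n : F) * G * b.repr r j := by
  have : FiniteDimensional F K := b.finiteDimensional_of_finite
  have hfr : Module.finrank F K = n := by simpa using Module.finrank_eq_card_basis b
  conv_lhs => rw [← b.sum_repr r]
  rw [Finset.sum_mul, map_sum, Finset.sum_eq_single j]
  · rw [smul_mul_assoc, map_smul, hb, ← pow_add, Nat.add_sub_cancel' j.2.le, hμ, 
      Algebra.trace_algebraMap, hfr, smul_eq_mul, nsmul_eq_mul]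
    ring
  · intro i _ hi
    rw [smul_mul_assoc, map_smul, hb, ← pow_add, aux_trace_pow hn hμ b hb, smul_zero]
    rintro ⟨k, hk⟩
    have h1 := i.2
    have h2 := j.2
    apply hi
    apply Fin.ext
    have hk1 : k = 1 := by
      have : k < 2 := by
        by_contra h
        have : n * 2 ≤ n * k := Nat.mul_le_mul_left _ (by omega)
        omega
      have : k ≠ 0 := by rintro rfl; omega
      omega
    subst hk1
    omega
  · simp

lemma aux_ic {S K : Type*} [CommRing S] [IsDomain S] [Field K] [Algebra S K]
    (B : Subalgebra S K) [IsIntegrallyClosed B] (x : K) (hx : IsIntegral S x)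
    (s t : B) (hs : s ≠ 0) (h : (s : K) * x = t) : x ∈ B := by
  let φ : FractionRing B →ₐ[B] K := IsFractionRing.liftAlgHom (g := Algebra.ofId B K)
    (by intro a b hab; exact Subtype.ext hab)
  have hs' : (s : K) ≠ 0 := fun h => hs (Subtype.ext h)
  have hx' : IsIntegral B x := hx.tower_top
  have e : φ (algebraMap B _ t / algebraMap B _ s) = x := by
    rw [map_div₀, AlgHom.commutes, AlgHom.commutes]
    change (t : K) / (s : K) = x
    rw [← h]; field_simp
  rw [← e] at hx'
  rw [isIntegral_algHom_iff φ φ.injective] at hx'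
  obtain ⟨y, hy⟩ := IsIntegrallyClosed.algebraMap_eq_of_integral hx'
  rw [← hy, AlgHom.commutes] at e
  rw [← e]
  exact y.2

/-- Elements of S[ω] have S-coordinates. -/
lemma aux_coord {S L F : Type*} [CommRing S] [Field L] [Algebra S L] [Field F] [Algebra L F]
    [Algebra S F] [IsScalarTower S L F] {n : ℕ} (hn : 0 < n) {ω : F} {f : S}
    (hω : ω ^ n = algebraMap S F f) (b : Module.Basis (Fin n) L F)
    (hb : ∀ i, b i = ω ^ (i : ℕ)) (x : F) (hx : x ∈ Algebra.adjoin S ({ω} : Set F)) (i : Fin n) :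
    ∃ s : S, b.repr x i = algebraMap S L s := by
  classical
  rw [Algebra.adjoin_singleton_eq_range_aeval] at hx
  obtain ⟨q, rfl⟩ := hx
  change ∃ s, b.repr (Polynomial.aeval ω q) i = _
  induction q using Polynomial.induction_on' with
  | add p q hp hq =>
    obtain ⟨s, hs⟩ := hp
    obtain ⟨t, ht⟩ := hq
    exact ⟨s + t, by simp [hs, ht]⟩
  | monomial m c =>
    have h1 : (Polynomial.aeval ω (Polynomial.monomial m c)) 
        = (algebraMap S L (c * f ^ (m / n))) • b ⟨m % n, Nat.mod_lt _ hn⟩ := by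
      rw [Polynomial.aeval_monomial, hb, Algebra.smul_def, ← IsScalarTower.algebraMap_apply,
        map_mul, map_pow, ← hω, ← pow_mul, mul_assoc, ← pow_add, Nat.div_add_mod]
    rw [h1, map_smul, Finsupp.smul_apply, Module.Basis.repr_self, Finsupp.single_apply]
    split_ifs
    · exact ⟨_, by rw [smul_eq_mul, mul_one]⟩
    · exact ⟨0, by simp⟩

lemma aux_int_coord {S L F K : Type*} [CommRing S] [IsDomain S] [Field L] [Algebra S L] 
    [IsFractionRing S L] [Field F] [Algebra L F]
    [Algebra S F] [IsScalarTower S L F] [Field K] [Algebra F K] [Algebra S K] [IsScalarTower S F K]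
    {n : ℕ} (hn : 0 < n) {ω : F} {f : S}
    (hω : ω ^ n = algebraMap S F f) (b : Module.Basis (Fin n) L F)
    (hb : ∀ i, b i = ω ^ (i : ℕ)) 
    (hic : IsIntegrallyClosed (Algebra.adjoin S ({algebraMap F K ω} : Set K)))
    (x : F) (hx : IsIntegral S x) (i : Fin n) :
    ∃ s : S, b.repr x i = algebraMap S L s := by
  apply aux_coord hn hω b hb
  have hmap : Algebra.adjoin S ({algebraMap F K ω} : Set K) = 
      (Algebra.adjoin S ({ω} : Set F)).map (IsScalarTower.toAlgHom S F K) := by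
    rw [AlgHom.map_adjoin, Set.image_singleton]; rfl
  obtain ⟨⟨d, hd⟩, hd'⟩ := IsLocalization.exist_integer_multiples_of_finite (nonZeroDivisors S)
    (fun j => b.repr x j)
  have hd0 : d ≠ 0 := nonZeroDivisors.ne_zero hd
  choose c hc using hd'
  have hinj : Function.Injective (algebraMap S K) := by
    rw [IsScalarTower.algebraMap_eq S F K, IsScalarTower.algebraMap_eq S L F]
    exact (algebraMap F K).injective.comp ((algebraMap L F).injective.comp (IsFractionRing.injective S L))
  have hdx : (algebraMap S F d) * x ∈ Algebra.adjoin S ({ω} : Set F) := by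
    rw [← b.sum_repr x, Finset.mul_sum]
    apply Subalgebra.sum_mem
    intro j _
    have : algebraMap S F d * (b.repr x j • b j) = algebraMap S F (c j) * ω ^ (j : ℕ) := by
      rw [hb, IsScalarTower.algebraMap_apply S L F (c j), hc, Algebra.smul_def, Algebra.smul_def,
        map_mul, ← IsScalarTower.algebraMap_apply S L F, mul_assoc]
    rw [this]
    exact mul_mem (Subalgebra.algebraMap_mem _ _) (pow_mem (Algebra.subset_adjoin (Set.mem_singleton _)) _)
  have key : algebraMap F K x ∈ Algebra.adjoin S ({algebraMap F K ω} : Set K) := by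
    refine aux_ic _ _ (hx.algebraMap) (algebraMap S _ d) ⟨algebraMap F K (algebraMap S F d * x), ?_⟩ ?_ ?_
    · rw [hmap]; exact ⟨_, hdx, rfl⟩
    · intro h
      apply hd0
      apply hinj
      simpa using congrArg Subtype.val h
    · simp [← IsScalarTower.algebraMap_apply]
  rw [hmap] at key
  obtain ⟨y, hy, hyx⟩ := key
  have : y = x := (algebraMap F K).injective hyx
  exact this ▸ hy

lemma aux_bound {E K : Type*} [Field E] [Field K] [Algebra E K] {p : ℕ} (hp : 0 < p) (x : K) (y : E)
    (hxy : x ^ p = algebraMap E K y) : (minpoly E x).natDegree ≤ p ∧ IsIntegral E x := by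
  have hm : (Polynomial.X ^ p - Polynomial.C y).Monic := Polynomial.monic_X_pow_sub_C y hp.ne'
  have hz : Polynomial.aeval x (Polynomial.X ^ p - Polynomial.C y) = 0 := by simp [hxy]
  refine ⟨?_, ⟨_, hm, hz⟩⟩
  have := Polynomial.natDegree_le_of_dvd (minpoly.dvd E x hz) hm.ne_zero
  rwa [Polynomial.natDegree_X_pow_sub_C] at this

lemma aux_key {S L K : Type*} [CommRing S] [IsDomain S] [Field L] [Algebra S L] 
    [IsFractionRing S L] [Field K] [Algebra L K] [Algebra S K] [IsScalarTower S L K]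
    {p : ℕ} (hp : 0 < p) {ω μ : K} {f g : S}
    (hω : ω ^ p = algebraMap S K f) (hμ : μ ^ p = algebraMap S K g)
    (hKgen : Algebra.adjoin L ({ω, μ} : Set K) = ⊤)
    (hdeg : Module.finrank L K = p ^ 2)
    (hicω : IsIntegrallyClosed (Algebra.adjoin S ({ω} : Set K))) :
    ∃ B : Module.Basis (Fin p × Fin p) L K, (∀ i j, B (i, j) = ω ^ (i : ℕ) * μ ^ (j : ℕ)) ∧
      ∀ r : K, IsIntegral S r → 
        (∃ s : S, (p : L) * B.repr r (⟨0, hp⟩, ⟨0, hp⟩) = algebraMap S L s) ∧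
        ∀ ij, ∃ s : S, (p : L) * algebraMap S L g * B.repr r ij = algebraMap S L s := by
  have : FiniteDimensional L K := Module.finite_of_finrank_pos (by rw [hdeg]; positivity)
  let F := IntermediateField.adjoin L ({ω} : Set K)
  let ω' : F := ⟨ω, IntermediateField.mem_adjoin_simple_self L ω⟩
  have : IsScalarTower S F K := IsScalarTower.of_algebraMap_eq (fun x => by
    rw [IsScalarTower.algebraMap_apply S L K, IsScalarTower.algebraMap_apply S L F, 
      ← IsScalarTower.algebraMap_apply L F K])
  have hω' : ω' ^ p = algebraMap S F f := by
    apply (algebraMap F K).injective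
    rw [← IsScalarTower.algebraMap_apply, ← hω]; rfl
  obtain ⟨b1, i1⟩ := aux_bound (E := L) hp ω (algebraMap S L f) (by rw [hω, ← IsScalarTower.algebraMap_apply])
  obtain ⟨b2, i2⟩ := aux_bound (E := F) hp μ (algebraMap S F g) (by rw [hμ, ← IsScalarTower.algebraMap_apply])
  have hgenF : Algebra.adjoin L ({ω'} : Set F) = ⊤ := by
    have := IntermediateField.adjoin_simple_toSubalgebra_of_isAlgebraic i1.isAlgebraic
    apply Subalgebra.map_injective (f := F.val) F.val.injective
    rw [AlgHom.map_adjoin, Set.image_singleton, Algebra.map_top]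
    change Algebra.adjoin L {ω} = _
    rw [← this]
    exact (IntermediateField.range_val F).symm
  have hgenK : Algebra.adjoin F ({μ} : Set K) = ⊤ := by
    rw [eq_top_iff]
    intro x _
    have hx : x ∈ Algebra.adjoin L ({ω, μ} : Set K) := by rw [hKgen]; trivial
    have hle : Algebra.adjoin L ({ω, μ} : Set K) ≤ (Algebra.adjoin F ({μ} : Set K)).restrictScalars L := by
      apply Algebra.adjoin_le
      rintro y (rfl | rfl)
      · exact (Algebra.adjoin F ({μ} : Set K)).algebraMap_mem ω'
      · exact Algebra.subset_adjoin (R := F) rfl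
    exact hle hx
  have htopK : IntermediateField.adjoin F ({μ} : Set K) = ⊤ := by
    rw [eq_top_iff]
    intro x _
    apply IntermediateField.algebra_adjoin_le_adjoin
    rw [hgenK]; trivial
  have fr1 : Module.finrank L F ≤ p := by
    rw [IntermediateField.adjoin.finrank i1]; exact b1
  have fr2 : Module.finrank F K ≤ p := by
    rw [← (Field.primitive_element_iff_minpoly_natDegree_eq F μ).1 htopK]; exact b2
  have frm : Module.finrank L F * Module.finrank F K = p ^ 2 := by
    rw [Module.finrank_mul_finrank, hdeg]
  have e1 : Module.finrank L F = p := by nlinarith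
  have e2 : Module.finrank F K = p := by nlinarith
  obtain ⟨bF, hbF⟩ := aux_pow_basis hp e1 ω' hgenF
  obtain ⟨bK, hbK⟩ := aux_pow_basis hp e2 μ hgenK
  have hμ' : μ ^ p = algebraMap F K (algebraMap S F g) := by
    rw [hμ, ← IsScalarTower.algebraMap_apply]
  refine ⟨bF.smulTower bK, ?_, ?_⟩
  · intro i j
    rw [Module.Basis.smulTower_apply, hbF, hbK, Algebra.smul_def]
    rfl
  · intro r hr
    have iμ : IsIntegral S μ := IsIntegral.of_pow hp (by rw [hμ]; exact isIntegral_algebraMap)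
    constructor
    · have h1 : IsIntegral S (Algebra.trace F K r) := Algebra.isIntegral_trace hr
      rw [aux_trace_zero hp hμ' bK hbK] at h1
      obtain ⟨s, hs⟩ := aux_int_coord (K := K) hp hω' bF hbF hicω _ h1 ⟨0, hp⟩
      refine ⟨s, ?_⟩
      rw [← hs, Module.Basis.smulTower_repr, ← nsmul_eq_mul, ← nsmul_eq_mul, map_nsmul]
      simp
    · rintro ⟨i, j⟩
      have h1 : IsIntegral S (Algebra.trace F K (r * μ ^ (p - (j : ℕ)))) := 
        Algebra.isIntegral_trace (hr.mul (iμ.pow _))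
      rw [aux_trace_mul hp hμ' bK hbK] at h1
      obtain ⟨s, hs⟩ := aux_int_coord (K := K) hp hω' bF hbF hicω _ h1 i
      refine ⟨s, ?_⟩
      have e : (p : F) * algebraMap S F g * bK.repr r j = 
          ((p : L) * algebraMap S L g) • bK.repr r j := by
        rw [Algebra.smul_def, map_mul, map_natCast, ← IsScalarTower.algebraMap_apply]
      rw [← hs, Module.Basis.smulTower_repr, e, map_smul]
      rfl

lemma aux_height {S : Type*} [CommRing S] [IsDomain S] [IsNoetherianRing S]
    (P : Ideal S) (hP : P.IsPrime) (q : S) (hq : q ∈ P) (hbot : P ≠ ⊥)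
    (hmin : ∀ P' : Ideal S, P'.IsPrime → q ∈ P' → P' ≤ P → P ≤ P') :
    Order.height (⟨P, hP⟩ : PrimeSpectrum S) = 1 := by
  rw [← PrimeSpectrum.height_eq_orderHeight]
  change P.height = 1
  apply le_antisymm
  · apply Ideal.height_le_one_of_isPrincipal_of_mem_minimalPrimes (Ideal.span {q})
    refine ⟨⟨hP, by simpa [Ideal.span_le] using hq⟩, ?_⟩
    rintro P' ⟨h1, h2⟩ h3
    exact hmin P' h1 (h2 (Ideal.mem_span_singleton_self q)) h3
  · rw [Order.one_le_iff_ne_zero]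
    rwa [Ne, Ideal.height_eq_zero_iff_eq_bot]

lemma aux_hartogs {S L : Type*} [CommRing S] [IsDomain S] [IsNoetherianRing S]
    [IsIntegrallyClosed S] [Field L] [Algebra S L] [IsFractionRing S L]
    {f g : S} (hf0 : f ≠ 0) (hA : SatisfiesA1 f g) (x : L)
    (h1 : ∃ s : S, x * algebraMap S L f = algebraMap S L s)
    (h2 : ∃ s : S, x * algebraMap S L g = algebraMap S L s) :
    ∃ s : S, x = algebraMap S L s := by
  obtain ⟨s, hs⟩ := h1
  obtain ⟨t, ht⟩ := h2
  have inj := IsFractionRing.injective S L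
  have hfL : algebraMap S L f ≠ 0 := by
    intro h; exact hf0 (inj (by rw [h, map_zero]))
  by_cases hsf : s ∈ Ideal.span {f}
  · obtain ⟨c, rfl⟩ := Ideal.mem_span_singleton'.1 hsf
    refine ⟨c, ?_⟩
    rw [map_mul] at hs
    exact mul_right_cancel₀ hfL hs
  exfalso
  have hne : (Ideal.Quotient.mk (Ideal.span {f}) s) ≠ 0 := by
    rwa [Ne, Ideal.Quotient.eq_zero_iff_mem]
  obtain ⟨P, hPass, hle⟩ := exists_le_isAssociatedPrime_of_isNoetherianRing S
    (M := S ⧸ Ideal.span {f}) _ hne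
  obtain ⟨hP, z, hz⟩ := isAssociatedPrime_iff.1 hPass
  obtain ⟨y, rfl⟩ := Ideal.Quotient.mk_surjective z
  have memP : ∀ c : S, c ∈ P ↔ c * y ∈ Ideal.span {f} := by
    intro c
    rw [hz, Submodule.mem_colon_singleton, Submodule.mem_bot, Algebra.smul_def, 
      ← Ideal.Quotient.eq_zero_iff_mem, map_mul]
    rfl
  have hfP : f ∈ P := (memP f).2 (Ideal.mem_span_singleton'.2 ⟨y, mul_comm _ _⟩)
  have hgP : g ∈ P := by
    apply hle
    rw [Submodule.mem_colon_singleton, Submodule.mem_bot, Algebra.smul_def]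
    change Ideal.Quotient.mk (Ideal.span {f}) g * Ideal.Quotient.mk (Ideal.span {f}) s = 0
    rw [← map_mul, Ideal.Quotient.eq_zero_iff_mem, Ideal.mem_span_singleton']
    refine ⟨t, inj ?_⟩
    rw [map_mul, map_mul, ← hs, ← ht]; ring
  have hyf : y ∉ Ideal.span {f} := by
    intro h
    exact hP.ne_top ((Ideal.eq_top_iff_one _).2 ((memP 1).2 (by simpa using h)))
  -- the fraction y / f
  have hbot : P ≠ ⊥ := by
    rintro rfl; exact hf0 (by simpa using hfP)
  have hex : ∀ c ∈ P, ∃ d : S, c * y = d * f := by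
    intro c hc
    obtain ⟨d, hd⟩ := Ideal.mem_span_singleton'.1 ((memP c).1 hc)
    exact ⟨d, hd.symm⟩
  apply hA P ⟨hP, ?_⟩ ⟨hfP, hgP⟩
  by_cases hall : ∀ c ∈ P, ∀ d : S, c * y = d * f → d ∈ P
  · exfalso
    have hint : IsIntegral S (algebraMap S L y / algebraMap S L f) := by
      apply isIntegral_of_smul_mem_submodule (M := L) (Submodule.map (Algebra.linearMap S L) P)
      · intro h0
        apply hbot
        rw [eq_bot_iff]
        intro c hc
        have h1 : Algebra.linearMap S L c ∈ Submodule.map (Algebra.linearMap S L) P := ⟨c, hc, rfl⟩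
        rw [h0, Submodule.mem_bot, Algebra.linearMap_apply] at h1
        exact (Submodule.mem_bot S).2 (inj (by rw [h1, map_zero]))
      · exact Submodule.FG.map _ ((isNoetherianRing_iff_ideal_fg S).1 inferInstance P)
      · rintro _ ⟨c, hc, rfl⟩
        obtain ⟨d, hd⟩ := hex c hc
        refine ⟨d, hall c hc d hd, ?_⟩
        have := congrArg (algebraMap S L) hd
        rw [map_mul, map_mul] at this
        rw [Algebra.linearMap_apply, Algebra.linearMap_apply, smul_eq_mul]
        field_simp
        rw [← this]; ring
    obtain ⟨d, hd⟩ := IsIntegrallyClosed.algebraMap_eq_of_integral hint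
    apply hyf
    rw [Ideal.mem_span_singleton']
    refine ⟨d, inj ?_⟩
    rw [map_mul, hd]; field_simp
  · push Not at hall
    obtain ⟨q, hq, u, hqu, hu⟩ := hall
    apply aux_height P hP q hq hbot
    intro P' hP' hqP' hle' c hc
    obtain ⟨d, hd⟩ := hex c hc
    have : u * c = q * d := by
      apply mul_right_cancel₀ hf0
      linear_combination c * hqu.symm - q * hd.symm
    have h3 : u * c ∈ P' := by rw [this]; exact P'.mul_mem_right _ hqP'
    exact (hP'.mem_or_mem h3).resolve_left (fun h => hu (hle' h))

lemma aux_not_dvd {S : Type*} [CommRing S] [IsDomain S] [IsNoetherianRing S]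
    {p : ℕ} (hp3 : 3 ≤ p) (hpS : Prime ((p : ℕ) : S)) {f g : S}
    (hfg : (¬IsUnit f ∧ ¬IsUnit g ∧ PaperSquarefree f ∧ PaperSquarefree g ∧ SatisfiesA1 f g) ∨
      (IsUnit f ∧ IsUnit g ∧ (∀ x : S, x ^ p ≠ f) ∧ (∀ x : S, x ^ p ≠ g)))
    (hfg1 : ∃ x y : S, f * g = x ^ p + y * (p : S) ^ 2) : ¬ (p : S) ∣ f := by
  intro hd
  rcases hfg with ⟨-, -, hsf, -, hA⟩ | ⟨hu, -⟩
  swap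
  · exact hpS.not_unit (isUnit_of_dvd_unit hd hu)
  have hP : (Ideal.span {(p : S)}).IsPrime := (Ideal.span_singleton_prime hpS.ne_zero).2 hpS
  have hht : Order.height (⟨Ideal.span {(p : S)}, hP⟩ : PrimeSpectrum S) = 1 := by
    apply aux_height _ hP (p : S) (Ideal.mem_span_singleton_self _)
    · simpa using hpS.ne_zero
    · intro P' _ h _
      rwa [Ideal.span_singleton_le_iff_mem]
  have hfm : f ∈ Ideal.span {(p : S)} := Ideal.mem_span_singleton.2 hd
  have hgd : ¬ (p : S) ∣ g := fun h => hA _ ⟨hP, hht⟩ ⟨hfm, Ideal.mem_span_singleton.2 h⟩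
  obtain ⟨x, y, hxy⟩ := hfg1
  have hx : (p : S) ∣ x := by
    apply hpS.dvd_of_dvd_pow (n := p)
    have : x ^ p = f * g - (y * p) * p := by rw [hxy]; ring
    rw [this]
    exact dvd_sub (hd.mul_right _) (dvd_mul_left _ _)
  have h2 : (p : S) ^ 2 ∣ g * f := by
    rw [mul_comm, hxy]
    exact dvd_add ((pow_dvd_pow_of_dvd hx 2).trans (pow_dvd_pow _ (by omega))) (dvd_mul_left _ _)
  obtain ⟨c, hc⟩ := hpS.pow_dvd_of_dvd_mul_left 2 hgd h2
  have hm := hsf _ hP hht hfm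
  have hpm : algebraMap S (Localization.AtPrime (Ideal.span {(p : S)})) p ∈
      Ideal.map (algebraMap S (Localization.AtPrime (Ideal.span {(p : S)}))) (Ideal.span {(p : S)}) :=
    Ideal.mem_map_of_mem _ (Ideal.mem_span_singleton_self _)
  rw [hm, Ideal.mem_span_singleton'] at hpm
  obtain ⟨r, hr⟩ := hpm
  have hinj : Function.Injective (algebraMap S (Localization.AtPrime (Ideal.span {(p : S)}))) :=
    IsLocalization.injective _ (Ideal.primeCompl_le_nonZeroDivisors (Ideal.span {(p : S)}))
  have hp0 : algebraMap S (Localization.AtPrime (Ideal.span {(p : S)})) p ≠ 0 := by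
    intro h; exact hpS.ne_zero (hinj (by rw [h, map_zero]))
  have hone : algebraMap S (Localization.AtPrime (Ideal.span {(p : S)})) p *
      (r * algebraMap S _ c) = 1 := by
    apply mul_right_cancel₀ hp0
    rw [one_mul]
    conv_rhs => rw [← hr, hc]
    rw [map_mul, map_pow]; ring
  have hunit := IsUnit.of_mul_eq_one _ hone
  rw [IsLocalization.AtPrime.isUnit_to_map_iff _ (Ideal.span {(p : S)})] at hunit
  exact hunit (Ideal.mem_span_singleton_self _)

lemma aux_adjoin_coord {S L K : Type*} [CommRing S] [Field L] [Algebra S L]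
    [Field K] [Algebra L K] [Algebra S K] [IsScalarTower S L K]
    {p : ℕ} (hp : 0 < p) {ω μ : K} {f g : S}
    (hω : ω ^ p = algebraMap S K f) (hμ : μ ^ p = algebraMap S K g)
    (B : Module.Basis (Fin p × Fin p) L K) 
    (hB : ∀ i j, B (i, j) = ω ^ (i : ℕ) * μ ^ (j : ℕ)) (ij : Fin p × Fin p)
    (x : K) (hx : x ∈ Algebra.adjoin S ({ω, μ} : Set K)) :
    ∃ s : S, B.repr x ij = algebraMap S L s := by
  classical
  rw [← Subalgebra.mem_toSubmodule, Algebra.adjoin_eq_span] at hx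
  induction hx using Submodule.span_induction with
  | zero => exact ⟨0, by simp⟩
  | add x y _ _ h1 h2 =>
    obtain ⟨s, hs⟩ := h1
    obtain ⟨t, ht⟩ := h2
    exact ⟨s + t, by simp [hs, ht]⟩
  | smul c x _ h =>
    obtain ⟨s, hs⟩ := h
    refine ⟨c * s, ?_⟩
    rw [← algebraMap_smul L c x, map_smul, Finsupp.smul_apply, hs, smul_eq_mul, map_mul]
  | mem x h =>
    obtain ⟨m, n, rfl⟩ := (Submonoid.mem_closure_pair _ _ _).1 h
    have h1 : ω ^ m * μ ^ n = (algebraMap S L (f ^ (m / p) * g ^ (n / p))) • 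
        B (⟨m % p, Nat.mod_lt _ hp⟩, ⟨n % p, Nat.mod_lt _ hp⟩) := by
      rw [hB, Algebra.smul_def, ← IsScalarTower.algebraMap_apply, map_mul, map_pow, map_pow, ← hω,
        ← hμ, ← pow_mul, ← pow_mul]
      conv_lhs => rw [← Nat.div_add_mod m p, ← Nat.div_add_mod n p, pow_add, pow_add]
      ring
    rw [h1, map_smul, Finsupp.smul_apply, Module.Basis.repr_self, Finsupp.single_apply]
    split_ifs
    · exact ⟨_, by rw [smul_eq_mul, mul_one]⟩
    · exact ⟨0, by simp⟩

lemma aux_top {S L K : Type*} [CommRing S] [Field L] [Algebra S L]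
    [Field K] [Algebra L K] [Algebra S K] [IsScalarTower S L K]
    {p : ℕ} (hp : 0 < p) {ω μ : K} 
    (B : Module.Basis (Fin p × Fin p) L K) 
    (hB : ∀ i j, B (i, j) = ω ^ (i : ℕ) * μ ^ (j : ℕ)) (h₁ h₂ : S) :
    B.repr ((ω - algebraMap S K h₁) ^ (p - 1) * (μ - algebraMap S K h₂) ^ (p - 1)) 
      (⟨0, hp⟩, ⟨0, hp⟩) = algebraMap S L ((- h₁) ^ (p - 1) * (- h₂) ^ (p - 1)) := by
  classical
  have expand : ∀ (w : K) (h : S), (w - algebraMap S K h) ^ (p - 1) = ∑ m : Fin p, 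
      algebraMap S K ((- h) ^ (p - 1 - (m : ℕ)) * ((p - 1).choose m : S)) * w ^ (m : ℕ) := by
    intro w h
    rw [sub_eq_add_neg, add_pow, Nat.sub_add_cancel hp, 
      Fin.sum_univ_eq_sum_range (fun m => algebraMap S K ((- h) ^ (p - 1 - m) * ((p - 1).choose m : S)) * w ^ m)]
    apply Finset.sum_congr rfl
    intro m _
    simp only [map_mul, map_pow, map_neg, map_natCast]
    ring
  rw [expand ω h₁, expand μ h₂, Finset.sum_mul_sum, map_sum, Finsupp.finset_sum_apply]
  have term : ∀ m n : Fin p, B.repr ((algebraMap S K ((- h₁) ^ (p - 1 - (m : ℕ)) * ((p - 1).choose m : S)) * ω ^ (m : ℕ)) *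
     (algebraMap S K ((- h₂) ^ (p - 1 - (n : ℕ)) * ((p - 1).choose n : S)) * μ ^ (n : ℕ))) (⟨0, hp⟩, ⟨0, hp⟩)
     = if (m, n) = (⟨0, hp⟩, ⟨0, hp⟩) then algebraMap S L (((- h₁) ^ (p - 1 - (m : ℕ)) * ((p - 1).choose m : S)) * ((- h₂) ^ (p - 1 - (n : ℕ)) * ((p - 1).choose n : S))) else 0 := by
    intro m n
    have : ∀ u v : S, (algebraMap S K u * ω ^ (m : ℕ)) * (algebraMap S K v * μ ^ (n : ℕ))
       = algebraMap S L (u * v) • B (m, n) := by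
      intro u v
      rw [hB, Algebra.smul_def, ← IsScalarTower.algebraMap_apply, map_mul]; ring
    rw [this, map_smul, Finsupp.smul_apply, Module.Basis.repr_self, Finsupp.single_apply]
    split_ifs <;> simp
  rw [Finset.sum_eq_single ⟨0, hp⟩, map_sum, Finsupp.finset_sum_apply, Finset.sum_eq_single ⟨0, hp⟩]
  · rw [term, if_pos rfl]; simp
  · intro n _ hn
    rw [term, if_neg]
    simpa using hn
  · simp
  · intro m _ hm
    rw [map_sum, Finsupp.finset_sum_apply]
    apply Finset.sum_eq_zero
    intro n _
    rw [term, if_neg]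
    intro h
    exact hm (Prod.ext_iff.1 h).1
  · simp

lemma aux_pow_p {S K : Type*} [CommRing S] [Field K] [Algebra S K] {p : ℕ} (hp : p.Prime)
    (hp3 : 3 ≤ p) (A : Subalgebra S K) {ω : K} (hA : ω ∈ A) {f h a : S} 
    (hω : ω ^ p = algebraMap S K f) (hf : f = h ^ p + a * (p : S)) :
    ∃ α ∈ A, (ω - algebraMap S K h) ^ p = (p : K) * α := by
  obtain ⟨r, hr⟩ := exists_add_pow_prime_eq hp (⟨ω, hA⟩ : A) (-(algebraMap S A h))
  have hr' := congrArg (Subtype.val) hr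
  have hodd : Odd p := hp.odd_of_ne_two (by omega)
  refine ⟨algebraMap S K a + -(ω * algebraMap S K h * r), add_mem (A.algebraMap_mem a) (neg_mem (mul_mem (mul_mem hA (A.algebraMap_mem h)) r.2)), ?_⟩
  have h2 : (ω + -(algebraMap S K h)) ^ p = ω ^ p + (-(algebraMap S K h)) ^ p + -(p * ω * algebraMap S K h * (r : K)) := by
    simpa using hr'
  rw [sub_eq_add_neg, h2, hω, hf, hodd.neg_pow]
  simp only [map_add, map_mul, map_pow, map_natCast]
  ring

lemma aux_span {S K : Type*} [CommRing S] [Field K] [Algebra S K] {p : ℕ}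
    (ω μ : K) (h₁ h₂ : S) (i j : Fin p) :
    ω ^ (i : ℕ) * μ ^ (j : ℕ) ∈ Submodule.span S (Set.range (fun kl : Fin p × Fin p => 
      (ω - algebraMap S K h₁) ^ (kl.1 : ℕ) * (μ - algebraMap S K h₂) ^ (kl.2 : ℕ))) := by
  have e1 : ω ^ (i : ℕ) = ((ω - algebraMap S K h₁) + algebraMap S K h₁) ^ (i : ℕ) := by simp
  have e2 : μ ^ (j : ℕ) = ((μ - algebraMap S K h₂) + algebraMap S K h₂) ^ (j : ℕ) := by simp
  rw [e1, e2, add_pow, add_pow, Finset.sum_mul_sum]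
  refine Submodule.sum_mem _ fun m hm => Submodule.sum_mem _ fun n hn => ?_
  rw [Finset.mem_range] at hm hn
  have hm' : m < p := by omega
  have hn' : n < p := by omega
  have : ∀ X Y : K, X ^ m * algebraMap S K h₁ ^ ((i : ℕ) - m) * (((i : ℕ).choose m : ℕ) : K) *
      (Y ^ n * algebraMap S K h₂ ^ ((j : ℕ) - n) * (((j : ℕ).choose n : ℕ) : K)) = 
      (h₁ ^ ((i : ℕ) - m) * ((i : ℕ).choose m : S) * (h₂ ^ ((j : ℕ) - n) * ((j : ℕ).choose n : S))) • (X ^ m * Y ^ n) := by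
    intro X Y
    rw [Algebra.smul_def]
    simp only [map_mul, map_pow, map_natCast]
    ring
  rw [this]
  exact Submodule.smul_mem _ _ (Submodule.subset_span ⟨(⟨m, hm'⟩, ⟨n, hn'⟩), rfl⟩)

lemma aux_dvd {S L K : Type*} [CommRing S] [IsDomain S] [Field L] [CharZero L] [Algebra S L] 
    [IsFractionRing S L] [Field K] [Algebra L K] [Algebra S K] [IsScalarTower S L K]
    {p : ℕ} (hp : p.Prime) (hp0 : 0 < p) (hp3 : 3 ≤ p) (hpS : Prime ((p : ℕ) : S)) {ω μ : K} {f g h₁ h₂ a b : S}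
    (hf : f = h₁ ^ p + a * (p : S)) (hg : g = h₂ ^ p + b * (p : S))
    (hω : ω ^ p = algebraMap S K f) (hμ : μ ^ p = algebraMap S K g)
    (hh₁ : ¬ (p : S) ∣ h₁) (hh₂ : ¬ (p : S) ∣ h₂)
    (B : Module.Basis (Fin p × Fin p) L K) 
    (hB : ∀ i j, B (i, j) = ω ^ (i : ℕ) * μ ^ (j : ℕ))
    (hT : ∀ r : K, IsIntegral S r → 
        (∃ s : S, (p : L) * B.repr r (⟨0, hp0⟩, ⟨0, hp0⟩) = algebraMap S L s))
    (r : K) (hr : IsIntegral S r) (e : Fin p × Fin p → S)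
    (he : (p : K) * r = ∑ kl, e kl • ((ω - algebraMap S K h₁) ^ (kl.1 : ℕ) * 
      (μ - algebraMap S K h₂) ^ (kl.2 : ℕ))) :
    ∀ n : ℕ, ∀ kl : Fin p × Fin p, (kl.1 : ℕ) + (kl.2 : ℕ) = n → n < p - 1 → (p : S) ∣ e kl := by
  classical
  have inj := IsFractionRing.injective S L
  have hpK : (p : K) ≠ 0 := by
    have : (p : L) ≠ 0 := by exact_mod_cast hp0.ne'
    intro h
    apply this
    apply (algebraMap L K).injective
    rw [map_natCast, h, map_zero]
  have memω : ω ∈ Algebra.adjoin S ({ω, μ} : Set K) := Algebra.subset_adjoin (by simp)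
  have memμ : μ ∈ Algebra.adjoin S ({ω, μ} : Set K) := Algebra.subset_adjoin (by simp)
  have iω : IsIntegral S ω := IsIntegral.of_pow hp0 (by rw [hω]; exact isIntegral_algebraMap)
  have iμ : IsIntegral S μ := IsIntegral.of_pow hp0 (by rw [hμ]; exact isIntegral_algebraMap)
  have hAint : ∀ x ∈ Algebra.adjoin S ({ω, μ} : Set K), IsIntegral S x := by
    intro x hx
    have : Algebra.adjoin S ({ω, μ} : Set K) ≤ integralClosure S K := by
      apply Algebra.adjoin_le
      rintro y (rfl | rfl)
      · exact iω
      · exact iμ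
    exact this hx
  obtain ⟨α, hα, hXp⟩ := aux_pow_p hp hp3 _ memω hω hf
  obtain ⟨β, hβ, hYp⟩ := aux_pow_p hp hp3 _ memμ hμ hg
  have htop := aux_top hp0 B hB h₁ h₂
  have memX : ω - algebraMap S K h₁ ∈ Algebra.adjoin S ({ω, μ} : Set K) := 
    sub_mem memω (Subalgebra.algebraMap_mem _ _)
  have memY : μ - algebraMap S K h₂ ∈ Algebra.adjoin S ({ω, μ} : Set K) := 
    sub_mem memμ (Subalgebra.algebraMap_mem _ _)
  have hcoord := aux_adjoin_coord hp0 hω hμ B hB (⟨0, hp0⟩, ⟨0, hp0⟩)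
  generalize ω - algebraMap S K h₁ = X at *
  generalize μ - algebraMap S K h₂ = Y at *
  let T : K →ₗ[L] L := B.coord (⟨0, hp0⟩, ⟨0, hp0⟩)
  have hTdef : ∀ x, B.repr x (⟨0, hp0⟩, ⟨0, hp0⟩) = T x := fun x => rfl
  simp only [hTdef] at hT htop hcoord
  clear_value T
  have hTS : ∀ (s : S) (x : K), T (s • x) = algebraMap S L s * T x := by
    intro s x
    rw [← algebraMap_smul L s x, map_smul, smul_eq_mul]
  have hTp : ∀ (x : K), T ((p : K) * x) = (p : L) * T x := by
    intro x
    rw [← nsmul_eq_mul, map_nsmul, nsmul_eq_mul]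
  have hTpA : ∀ x ∈ Algebra.adjoin S ({ω, μ} : Set K), ∀ s : S, ∃ t : S, 
      T (s • ((p : K) * x)) = algebraMap S L ((p : S) * t) := by
    intro x hx s
    obtain ⟨t, ht⟩ := hcoord x hx
    refine ⟨s * t, ?_⟩
    rw [hTS, hTp, ht]
    simp only [map_mul, map_natCast]; ring
  intro n
  induction n using Nat.strong_induction_on with
  | _ n ih =>
  rintro ⟨⟨k, hk⟩, ⟨l, hl⟩⟩ hkl hn
  simp only at hkl
  -- the test element
  have hzint : IsIntegral S (X ^ (p - 1 - k) * Y ^ (p - 1 - l) / (p : K)) := by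
    apply IsIntegral.of_pow hp0
    have : (X ^ (p - 1 - k) * Y ^ (p - 1 - l) / (p : K)) ^ p = 
        (p : K) ^ (p - 2 - n) * α ^ (p - 1 - k) * β ^ (p - 1 - l) := by
      rw [div_pow, div_eq_iff (pow_ne_zero _ hpK), mul_pow, ← pow_mul, ← pow_mul, mul_comm _ p, 
        mul_comm _ p, pow_mul, pow_mul, hXp, hYp, mul_pow, mul_pow]
      have : (p : K) ^ (p - 1 - k) * (p : K) ^ (p - 1 - l) = (p : K) ^ (p - 2 - n) * (p : K) ^ p := by
        rw [← pow_add, ← pow_add]; congr 1; omega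
      linear_combination α ^ (p - 1 - k) * β ^ (p - 1 - l) * this
    rw [this]
    apply hAint
    exact mul_mem (mul_mem (pow_mem (natCast_mem _ p) _) (pow_mem hα _)) (pow_mem hβ _)
  obtain ⟨s, hs⟩ := hT _ (hr.mul hzint)
  rw [← hTp] at hs
  have hsum : T ((p : K) * ((p : K) * (r * (X ^ (p - 1 - k) * Y ^ (p - 1 - l) / (p : K))))) = 
      algebraMap S L (p * s) := by
    rw [hTp, hs, map_mul, map_natCast]
  have hexp : (p : K) * ((p : K) * (r * (X ^ (p - 1 - k) * Y ^ (p - 1 - l) / (p : K)))) = 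
      ∑ ij : Fin p × Fin p, e ij • (X ^ ((ij.1 : ℕ) + (p - 1 - k)) * Y ^ ((ij.2 : ℕ) + (p - 1 - l))) := by
    have : (p : K) * ((p : K) * (r * (X ^ (p - 1 - k) * Y ^ (p - 1 - l) / (p : K)))) = 
        ((p : K) * r) * (X ^ (p - 1 - k) * Y ^ (p - 1 - l)) := by field_simp
    rw [this, he, Finset.sum_mul]
    apply Finset.sum_congr rfl
    intro ij _
    rw [smul_mul_assoc, pow_add, pow_add]
    congr 1; ring
  have hterm : ∀ ij : Fin p × Fin p, ij ≠ (⟨k, hk⟩, ⟨l, hl⟩) → ∃ t : S, 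
      T (e ij • (X ^ ((ij.1 : ℕ) + (p - 1 - k)) * Y ^ ((ij.2 : ℕ) + (p - 1 - l)))) = 
        algebraMap S L ((p : S) * t) := by
    rintro ⟨⟨i, hi⟩, ⟨j, hj⟩⟩ hne
    simp only
    by_cases h1 : k < i
    · have : X ^ (i + (p - 1 - k)) * Y ^ (j + (p - 1 - l)) = (p : K) * (α * X ^ (i - 1 - k) * Y ^ (j + (p - 1 - l))) := by
        rw [show i + (p - 1 - k) = p + (i - 1 - k) by omega, pow_add X, hXp]; ring
      rw [this]
      exact hTpA _ (mul_mem (mul_mem hα (pow_mem memX _)) (pow_mem memY _)) _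
    by_cases h2 : l < j
    · have : X ^ (i + (p - 1 - k)) * Y ^ (j + (p - 1 - l)) = (p : K) * (β * X ^ (i + (p - 1 - k)) * Y ^ (j - 1 - l)) := by
        rw [show j + (p - 1 - l) = p + (j - 1 - l) by omega, pow_add Y, hYp]; ring
      rw [this]
      exact hTpA _ (mul_mem (mul_mem hβ (pow_mem memX _)) (pow_mem memY _)) _
    have hlt : i + j < n := by
      have : ¬ (i = k ∧ j = l) := by
        rintro ⟨rfl, rfl⟩; exact hne rfl
      omega
    obtain ⟨d, hd⟩ := ih (i + j) hlt (⟨i, hi⟩, ⟨j, hj⟩) rfl (by omega)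
    obtain ⟨t, ht⟩ := hcoord (X ^ (i + (p - 1 - k)) * Y ^ (j + (p - 1 - l))) 
      (mul_mem (pow_mem memX _) (pow_mem memY _))
    refine ⟨d * t, ?_⟩
    rw [hTS, ht, hd, ← map_mul, mul_assoc]
  choose! t ht using hterm
  rw [hexp, map_sum, ← Finset.add_sum_erase _ _ (Finset.mem_univ ((⟨k, hk⟩, ⟨l, hl⟩) : Fin p × Fin p)),
    Finset.sum_congr rfl (fun ij hij => ht ij (Finset.ne_of_mem_erase hij)), ← map_sum, hTS] at hsum
  simp only at hsum
  rw [show k + (p - 1 - k) = p - 1 by omega, show l + (p - 1 - l) = p - 1 by omega, htop, ← map_mul,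
    ← map_add] at hsum
  have h3 := inj hsum
  rw [← Finset.mul_sum] at h3
  have h4 : (p : S) ∣ e (⟨k, hk⟩, ⟨l, hl⟩) * ((-h₁) ^ (p - 1) * (-h₂) ^ (p - 1)) := by
    rw [eq_sub_of_add_eq h3, ← mul_sub]
    exact dvd_mul_right _ _
  rcases hpS.dvd_or_dvd h4 with h | h
  · exact h
  · rcases hpS.dvd_or_dvd h with h | h
    · exact absurd ((dvd_neg).1 (hpS.dvd_of_dvd_pow h)) hh₁
    · exact absurd ((dvd_neg).1 (hpS.dvd_of_dvd_pow h)) hh₂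

theorem stmt9
    {S : Type*} [CommRing S] [IsDomain S] [IsNoetherianRing S] [IsIntegrallyClosed S]
    {L : Type*} [Field L] [CharZero L] [Algebra S L] [IsFractionRing S L]
    {K : Type*} [Field K] [Algebra L K] [Algebra S K] [IsScalarTower S L K]
    {p : ℕ} (hp : p.Prime) (hp3 : 3 ≤ p) (hpS : Prime ((p : ℕ) : S))
    (hSmodp : IsIntegrallyClosed (S ⧸ Ideal.span {((p : ℕ) : S)}))
    {f g h₁ h₂ a b : S} (hf : f = h₁ ^ p + a * (p : S)) (hg : g = h₂ ^ p + b * (p : S))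
    (hfg : (¬IsUnit f ∧ ¬IsUnit g ∧ PaperSquarefree f ∧ PaperSquarefree g ∧ SatisfiesA1 f g) ∨
      (IsUnit f ∧ IsUnit g ∧ (∀ x : S, x ^ p ≠ f) ∧ (∀ x : S, x ^ p ≠ g)))
    {ω μ : K} (hω : ω ^ p = algebraMap S K f) (hμ : μ ^ p = algebraMap S K g)
    (hKgen : Algebra.adjoin L ({ω, μ} : Set K) = ⊤)
    (hdeg : Module.finrank L K = p ^ 2)
    (hicω : IsIntegrallyClosed (Algebra.adjoin S ({ω} : Set K)))
    (hicμ : IsIntegrallyClosed (Algebra.adjoin S ({μ} : Set K)))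
    (hh₁ : h₁ ≠ 0) (hh₂ : h₂ ≠ 0)
    (hfg1 : ∃ x y : S, f * g = x ^ p + y * (p : S) ^ 2) :
    (integralClosure S K : Set K) ⊆
      {x : K | ∃ u : Algebra.adjoin S ({ω, μ} : Set K),
        ∃ z ∈ (Ideal.span {omegaA ω μ - algebraMap S _ h₁,
            muA ω μ - algebraMap S _ h₂} : Ideal (Algebra.adjoin S ({ω, μ} : Set K))) ^ (p - 1),
          x = (u : K) + (p : K)⁻¹ * (z : K)} := by
  
  classical
  intro r hr
  have hr : IsIntegral S r := hr
  have hp0 : 0 < p := by omega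
  have inj := IsFractionRing.injective S L
  have hpK : (p : K) ≠ 0 := by
    have : (p : L) ≠ 0 := by exact_mod_cast hp0.ne'
    intro h
    apply this
    apply (algebraMap L K).injective
    rw [map_natCast, h, map_zero]
  have hpf : ¬ (p : S) ∣ f := aux_not_dvd hp3 hpS hfg hfg1
  have hpg : ¬ (p : S) ∣ g := by
    apply aux_not_dvd (f := g) (g := f) hp3 hpS
    · rcases hfg with ⟨x1, x2, x3, x4, x5⟩ | ⟨x1, x2, x3, x4⟩
      · exact Or.inl ⟨x2, x1, x4, x3, fun P hP h => x5 P hP ⟨h.2, h.1⟩⟩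
      · exact Or.inr ⟨x2, x1, x4, x3⟩
    · obtain ⟨x, y, h⟩ := hfg1
      exact ⟨x, y, by rw [mul_comm, h]⟩
  have hn₁ : ¬ (p : S) ∣ h₁ := fun h => hpf (by
    rw [hf]; exact dvd_add (dvd_pow h hp0.ne') (dvd_mul_left _ _))
  have hn₂ : ¬ (p : S) ∣ h₂ := fun h => hpg (by
    rw [hg]; exact dvd_add (dvd_pow h hp0.ne') (dvd_mul_left _ _))
  have hf0 : f ≠ 0 := fun h => hpf (by rw [h]; exact dvd_zero _)
  obtain ⟨B, hB, hBint⟩ := aux_key (L := L) hp0 hω hμ hKgen hdeg hicω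
  obtain ⟨B', hB', hBint'⟩ := aux_key (L := L) hp0 hμ hω (by rw [Set.pair_comm]; exact hKgen) hdeg hicμ
  have hBB : B'.reindex (Equiv.prodComm _ _) = B := by
    apply Module.Basis.eq_of_apply_eq
    rintro ⟨i, j⟩
    rw [Module.Basis.reindex_apply]
    change B' (j, i) = _
    rw [hB', hB, mul_comm]
  have hpc : ∀ ij, ∃ s : S, (p : L) * B.repr r ij = algebraMap S L s := by
    rintro ⟨i, j⟩
    have hg1 : ∃ s : S, (p : L) * B.repr r (i, j) * algebraMap S L g = algebraMap S L s := by
      obtain ⟨s, hs⟩ := (hBint r hr).2 (i, j)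
      exact ⟨s, by rw [← hs]; ring⟩
    have hf1 : ∃ s : S, (p : L) * B.repr r (i, j) * algebraMap S L f = algebraMap S L s := by
      obtain ⟨s, hs⟩ := (hBint' r hr).2 (j, i)
      refine ⟨s, ?_⟩
      rw [← hs, ← hBB, Module.Basis.repr_reindex_apply]
      change (p : L) * B'.repr r (j, i) * _ = _
      ring
    rcases hfg with ⟨-, -, -, -, hA⟩ | ⟨hu, -⟩
    · exact aux_hartogs hf0 hA _ hf1 hg1
    · obtain ⟨s, hs⟩ := hf1
      obtain ⟨v, hv⟩ := hu.exists_right_inv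
      refine ⟨s * v, ?_⟩
      rw [map_mul, ← hs, mul_assoc, ← map_mul, hv, map_one, mul_one]
  choose c hc using hpc
  have hmem : (p : K) * r ∈ Submodule.span S (Set.range (fun kl : Fin p × Fin p => 
      (ω - algebraMap S K h₁) ^ (kl.1 : ℕ) * (μ - algebraMap S K h₂) ^ (kl.2 : ℕ))) := by
    have : (p : K) * r = ∑ ij, c ij • (ω ^ (ij.1 : ℕ) * μ ^ (ij.2 : ℕ)) := by
      conv_lhs => rw [← B.sum_repr r, Finset.mul_sum]
      apply Finset.sum_congr rfl
      rintro ⟨i, j⟩ _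
      rw [hB, Algebra.smul_def, Algebra.smul_def, IsScalarTower.algebraMap_apply S L K, ← hc, map_mul,
        map_natCast, mul_assoc]
    rw [this]
    exact Submodule.sum_mem _ fun ij _ => Submodule.smul_mem _ _ (aux_span ω μ h₁ h₂ ij.1 ij.2)
  obtain ⟨e, he⟩ := (Submodule.mem_span_range_iff_exists_fun S).1 hmem
  have hdvd := aux_dvd hp hp0 hp3 hpS hf hg hω hμ hn₁ hn₂ B hB (fun r hr => (hBint r hr).1) r hr e he.symm
  have hdvd' : ∀ kl : Fin p × Fin p, (kl.1 : ℕ) + (kl.2 : ℕ) < p - 1 → ∃ d, e kl = p * d :=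
    fun kl h => hdvd _ kl rfl h
  choose! d hd using hdvd'
  set X : Algebra.adjoin S ({ω, μ} : Set K) := omegaA ω μ - algebraMap S _ h₁ with hX
  set Y : Algebra.adjoin S ({ω, μ} : Set K) := muA ω μ - algebraMap S _ h₂ with hY
  have hXc : (X : K) = ω - algebraMap S K h₁ := rfl
  have hYc : (Y : K) = μ - algebraMap S K h₂ := rfl
  rw [← hXc, ← hYc] at he
  refine ⟨∑ kl : Fin p × Fin p with (kl.1 : ℕ) + (kl.2 : ℕ) < p - 1, d kl • (X ^ (kl.1 : ℕ) * Y ^ (kl.2 : ℕ)),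
    ∑ kl : Fin p × Fin p with ¬ ((kl.1 : ℕ) + (kl.2 : ℕ) < p - 1), e kl • (X ^ (kl.1 : ℕ) * Y ^ (kl.2 : ℕ)), ?_, ?_⟩
  · apply Ideal.sum_mem
    rintro kl hkl
    rw [Finset.mem_filter] at hkl
    rw [Algebra.smul_def]
    apply Ideal.mul_mem_left
    have hle : p - 1 ≤ (kl.1 : ℕ) + (kl.2 : ℕ) := not_lt.1 hkl.2
    apply Ideal.pow_le_pow_right hle
    rw [pow_add]
    exact Ideal.mul_mem_mul (Ideal.pow_mem_pow (Ideal.subset_span (by simp)) _)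
      (Ideal.pow_mem_pow (Ideal.subset_span (by simp)) _)
  · have h5 : (p : K) * r = (p : K) * ((∑ kl : Fin p × Fin p with (kl.1 : ℕ) + (kl.2 : ℕ) < p - 1, d kl • (X ^ (kl.1 : ℕ) * Y ^ (kl.2 : ℕ)) : Algebra.adjoin S ({ω, μ} : Set K)) : K) + 
       ((∑ kl : Fin p × Fin p with ¬ ((kl.1 : ℕ) + (kl.2 : ℕ) < p - 1), e kl • (X ^ (kl.1 : ℕ) * Y ^ (kl.2 : ℕ)) : Algebra.adjoin S ({ω, μ} : Set K)) : K) := by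
      rw [← he, ← Finset.sum_filter_add_sum_filter_not Finset.univ (fun kl : Fin p × Fin p => (kl.1 : ℕ) + (kl.2 : ℕ) < p - 1)]
      rw [AddSubmonoidClass.coe_finset_sum, AddSubmonoidClass.coe_finset_sum, Finset.mul_sum]
      congr 1
      apply Finset.sum_congr rfl
      intro kl hkl
      rw [hd kl (Finset.mem_filter.1 hkl).2, Algebra.smul_def, map_mul, map_natCast, mul_assoc, ← Algebra.smul_def]
      rfl
    apply mul_left_cancel₀ hpK
    rw [h5, mul_add, mul_inv_cancel_left₀ hpK]
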